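/- Let χ : ℝ → ℝ be a smooth function with 0 ≤ χ ≤ 1, χ(x) = 1 for |x| ≤ 3, and χ(x) = 0 for |x| ≥ 6, and let 0 < p ≤ 1. Then there exists a constant C depending only on χ and p such that for all real numbers u, a, b with a ≠ 0 and b ≠ 0, one has |χ(u/a) − χ(u/b)| · |u|^{1+p} ≤ C |a − b| ( |a|^p + |b|^p ). -/

import Mathlib

/-!
For fixed `u`, the map `a ↦ ‖u‖ χ(a⁻¹ u)` on `a ≠ 0` is Lipschitz with constant `K R²` when `χ` is
`K`-Lipschitz and vanishes outside the ball of radius `R`. If `‖u‖ ≤ R ‖a‖` and `‖u‖ ≤ R ‖b‖`,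
this follows from `‖a⁻¹ u - b⁻¹ u‖ = ‖a - b‖ ‖u‖ / (‖a‖ ‖b‖)`. If only `‖u‖ ≤ R ‖a‖`, then `b` may
be replaced by the positive multiple `c` of `a` with `R ‖c‖ = ‖u‖`: it is no farther from `a`, and
`χ(c⁻¹ u)` vanishes as well. The remaining factor `‖u‖ ^ p` is at most
`R ^ p (‖a‖ ^ p + ‖b‖ ^ p)` unless both values of `χ` vanish.
-/

open scoped NNReal

theorem norm_inv_smul_sub_inv_smul {𝕜 E : Type*} [NormedField 𝕜] [SeminormedAddCommGroup E]
    [NormedSpace 𝕜 E] {a b : 𝕜} (ha : a ≠ 0) (hb : b ≠ 0) (u : E) :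
    ‖a⁻¹ • u - b⁻¹ • u‖ = ‖a - b‖ / (‖a‖ * ‖b‖) * ‖u‖ := by
  rw [← sub_smul, norm_smul, ← dist_eq_norm, dist_inv_inv₀ ha hb, dist_eq_norm]

theorem le_norm_inv_smul_iff {𝕜 E : Type*} [NormedField 𝕜] [SeminormedAddCommGroup E]
    [NormedSpace 𝕜 E] {a : 𝕜} (ha : a ≠ 0) {u : E} {R : ℝ} :
    R ≤ ‖a⁻¹ • u‖ ↔ R * ‖a‖ ≤ ‖u‖ := by
  rw [norm_smul, norm_inv, le_inv_mul_iff₀ (norm_pos_iff.2 ha), mul_comm]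

theorem exists_norm_eq_and_norm_sub_eq {E : Type*} [SeminormedAddCommGroup E] [NormedSpace ℝ E]
    {x : E} {r : ℝ} (hr : 0 ≤ r) (hrx : r ≤ ‖x‖) : ∃ y : E, ‖y‖ = r ∧ ‖x - y‖ = ‖x‖ - r := by
  rcases (norm_nonneg x).eq_or_lt with hx | hx_pos
  · obtain rfl : r = 0 := le_antisymm (hrx.trans_eq hx.symm) hr
    exact ⟨0, norm_zero, by rw [sub_zero, sub_zero]⟩
  refine ⟨(r / ‖x‖) • x, ?_, ?_⟩
  · rw [norm_smul, Real.norm_of_nonneg (by positivity), div_mul_cancel₀ _ hx_pos.ne']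
  · have hfactor : 0 ≤ 1 - r / ‖x‖ := sub_nonneg.2 (div_le_one_of_le₀ hrx hx_pos.le)
    calc ‖x - (r / ‖x‖) • x‖ = ‖(1 - r / ‖x‖) • x‖ := by rw [sub_smul, one_smul]
      _ = (1 - r / ‖x‖) * ‖x‖ := by rw [norm_smul, Real.norm_of_nonneg hfactor]
      _ = ‖x‖ - r := by rw [sub_mul, one_mul, div_mul_cancel₀ _ hx_pos.ne']

theorem max_rpow_le_rpow_add_rpow {x y : ℝ} (hx : 0 ≤ x) (hy : 0 ≤ y) (p : ℝ) :
    max x y ^ p ≤ x ^ p + y ^ p := by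
  rcases max_choice x y with h | h <;> rw [h]
  · exact le_add_of_nonneg_right (Real.rpow_nonneg hy p)
  · exact le_add_of_nonneg_left (Real.rpow_nonneg hx p)

theorem exists_lipschitzWith_of_contDiff_of_eq_zero {E F : Type*} [NormedAddCommGroup E]
    [NormedSpace ℝ E] [ProperSpace E] [NormedAddCommGroup F] [NormedSpace ℝ F] {χ : E → F}
    {R : ℝ} (hχ : ContDiff ℝ 1 χ) (hχ_zero : ∀ x, R ≤ ‖x‖ → χ x = 0) :
    ∃ K : ℝ≥0, LipschitzWith K χ := by
  have hsupp : HasCompactSupport χ := .intro (isCompact_closedBall 0 R) fun x hx =>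
    hχ_zero x (le_of_not_ge (mt mem_closedBall_zero_iff.2 hx))
  exact hχ.lipschitzWith_of_hasCompactSupport hsupp one_ne_zero

section LipschitzCutoff

variable {𝕜 E F : Type*} [SeminormedAddCommGroup E] [SeminormedAddCommGroup F]
  {χ : E → F} {K : ℝ≥0} {R : ℝ} {u : E}

theorem norm_map_inv_smul_sub_mul_norm_le_of_norm_le [NormedField 𝕜] [NormedSpace 𝕜 E]
    {a b : 𝕜} (hχ : LipschitzWith K χ) (ha : a ≠ 0) (hb : b ≠ 0)
    (hua : ‖u‖ ≤ R * ‖a‖) (hub : ‖u‖ ≤ R * ‖b‖) :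
    ‖χ (a⁻¹ • u) - χ (b⁻¹ • u)‖ * ‖u‖ ≤ K * R ^ 2 * ‖a - b‖ := by
  have hlip : ‖χ (a⁻¹ • u) - χ (b⁻¹ • u)‖ ≤ K * (‖a - b‖ / (‖a‖ * ‖b‖) * ‖u‖) := by
    simpa only [norm_inv_smul_sub_inv_smul ha hb] using hχ.norm_sub_le (a⁻¹ • u) (b⁻¹ • u)
  calc ‖χ (a⁻¹ • u) - χ (b⁻¹ • u)‖ * ‖u‖
      ≤ K * (‖a - b‖ / (‖a‖ * ‖b‖) * ‖u‖) * ‖u‖ := by gcongr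
    _ = K * (‖a - b‖ / (‖a‖ * ‖b‖)) * (‖u‖ * ‖u‖) := by ring
    _ ≤ K * (‖a - b‖ / (‖a‖ * ‖b‖)) * ((R * ‖a‖) * (R * ‖b‖)) := by
      gcongr
      exact (norm_nonneg u).trans hua
    _ = K * R ^ 2 * ‖a - b‖ := by field_simp

variable [RCLike 𝕜] [NormedSpace 𝕜 E] {a b : 𝕜}

theorem norm_map_inv_smul_sub_mul_norm_le_of_norm_le_of_le_norm (hχ : LipschitzWith K χ)
    (hχ_zero : ∀ x, R ≤ ‖x‖ → χ x = 0) (ha : a ≠ 0) (hb : b ≠ 0) (hua : ‖u‖ ≤ R * ‖a‖)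
    (hub : R * ‖b‖ ≤ ‖u‖) :
    ‖χ (a⁻¹ • u) - χ (b⁻¹ • u)‖ * ‖u‖ ≤ K * R ^ 2 * ‖a - b‖ := by
  rcases (norm_nonneg u).eq_or_lt with hu | hu
  · rw [← hu, mul_zero]
    positivity
  have hR_pos : 0 < R := pos_of_mul_pos_left (hu.trans_le hua) (norm_nonneg a)
  obtain ⟨c, hc_norm, hac⟩ : ∃ c : 𝕜, ‖c‖ = ‖u‖ / R ∧ ‖a - c‖ = ‖a‖ - ‖u‖ / R :=
    exists_norm_eq_and_norm_sub_eq (by positivity) ((div_le_iff₀' hR_pos).2 hua)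
  have hc : c ≠ 0 := norm_pos_iff.1 (hc_norm ▸ by positivity)
  have huc : R * ‖c‖ = ‖u‖ := by rw [hc_norm, mul_div_cancel₀ _ hR_pos.ne']
  have hbc : χ (b⁻¹ • u) = χ (c⁻¹ • u) := by
    rw [hχ_zero _ ((le_norm_inv_smul_iff hb).2 hub), hχ_zero _ ((le_norm_inv_smul_iff hc).2 huc.le)]
  have hac_le : ‖a - c‖ ≤ ‖a - b‖ := by
    have hb_le : ‖b‖ ≤ ‖u‖ / R := (le_div_iff₀' hR_pos).2 hub
    linarith [norm_sub_norm_le a b]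
  calc ‖χ (a⁻¹ • u) - χ (b⁻¹ • u)‖ * ‖u‖ = ‖χ (a⁻¹ • u) - χ (c⁻¹ • u)‖ * ‖u‖ := by rw [hbc]
    _ ≤ K * R ^ 2 * ‖a - c‖ :=
      norm_map_inv_smul_sub_mul_norm_le_of_norm_le hχ ha hc hua huc.ge
    _ ≤ K * R ^ 2 * ‖a - b‖ := by gcongr

theorem norm_map_inv_smul_sub_mul_norm_le (hχ : LipschitzWith K χ)
    (hχ_zero : ∀ x, R ≤ ‖x‖ → χ x = 0) (ha : a ≠ 0) (hb : b ≠ 0) :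
    ‖χ (a⁻¹ • u) - χ (b⁻¹ • u)‖ * ‖u‖ ≤ K * R ^ 2 * ‖a - b‖ := by
  rcases le_total ‖u‖ (R * ‖a‖) with hua | hua <;> rcases le_total ‖u‖ (R * ‖b‖) with hub | hub
  · exact norm_map_inv_smul_sub_mul_norm_le_of_norm_le hχ ha hb hua hub
  · exact norm_map_inv_smul_sub_mul_norm_le_of_norm_le_of_le_norm hχ hχ_zero ha hb hua hub
  · rw [norm_sub_rev, norm_sub_rev a]
    exact norm_map_inv_smul_sub_mul_norm_le_of_norm_le_of_le_norm hχ hχ_zero hb ha hub hua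
  · rw [hχ_zero _ ((le_norm_inv_smul_iff ha).2 hua), hχ_zero _ ((le_norm_inv_smul_iff hb).2 hub),
      sub_self, norm_zero, zero_mul]
    positivity

theorem truncated_nonlinearity_contraction_estimate_general (hχ : LipschitzWith K χ)
    (hR : 0 ≤ R) (hχ_zero : ∀ x, R ≤ ‖x‖ → χ x = 0) {p : ℝ} (hp : 0 ≤ p)
    (ha : a ≠ 0) (hb : b ≠ 0) :
    ‖χ (a⁻¹ • u) - χ (b⁻¹ • u)‖ * ‖u‖ ^ (1 + p) ≤
      K * R ^ (2 + p) * ‖a - b‖ * (‖a‖ ^ p + ‖b‖ ^ p) := by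
  rcases le_total (R * max ‖a‖ ‖b‖) ‖u‖ with hu | hu
  · have hua : R * ‖a‖ ≤ ‖u‖ := (mul_le_mul_of_nonneg_left (le_max_left _ _) hR).trans hu
    have hub : R * ‖b‖ ≤ ‖u‖ := (mul_le_mul_of_nonneg_left (le_max_right _ _) hR).trans hu
    rw [hχ_zero _ ((le_norm_inv_smul_iff ha).2 hua), hχ_zero _ ((le_norm_inv_smul_iff hb).2 hub),
      sub_self, norm_zero, zero_mul]
    positivity
  have hup : ‖u‖ ^ p ≤ R ^ p * (‖a‖ ^ p + ‖b‖ ^ p) := calc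
    ‖u‖ ^ p ≤ (R * max ‖a‖ ‖b‖) ^ p := by gcongr
    _ = R ^ p * max ‖a‖ ‖b‖ ^ p := Real.mul_rpow hR (by positivity)
    _ ≤ R ^ p * (‖a‖ ^ p + ‖b‖ ^ p) := by
      gcongr
      exact max_rpow_le_rpow_add_rpow (norm_nonneg a) (norm_nonneg b) p
  calc ‖χ (a⁻¹ • u) - χ (b⁻¹ • u)‖ * ‖u‖ ^ (1 + p)
      = ‖χ (a⁻¹ • u) - χ (b⁻¹ • u)‖ * ‖u‖ * ‖u‖ ^ p := by
        rw [Real.rpow_add_of_nonneg (norm_nonneg u) zero_le_one hp, Real.rpow_one, mul_assoc]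
    _ ≤ K * R ^ 2 * ‖a - b‖ * (R ^ p * (‖a‖ ^ p + ‖b‖ ^ p)) := by
        gcongr ?_ * ?_
        exact norm_map_inv_smul_sub_mul_norm_le hχ hχ_zero ha hb
    _ = K * R ^ (2 + p) * ‖a - b‖ * (‖a‖ ^ p + ‖b‖ ^ p) := by
        rw [Real.rpow_add_of_nonneg hR zero_le_two hp, Real.rpow_two]
        ring

end LipschitzCutoff

/-- **Lipschitz-type estimate for the truncated nonlinearity.**
Let `χ : ℝ → ℝ` be smooth, `0 ≤ χ ≤ 1`, `χ = 1` on `|x| ≤ 3`, `χ = 0` on `|x| ≥ 6`,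
and let `0 < p ≤ 1`. Then there is `C` depending only on `χ` and `p` such that for all
real `u`, `a ≠ 0`, `b ≠ 0`,
`|χ(u/a) − χ(u/b)| ⬝ |u|^{1+p} ≤ C |a − b| (|a|^p + |b|^p)`. -/
theorem truncated_nonlinearity_contraction_estimate
    (χ : ℝ → ℝ) (hχsmooth : ContDiff ℝ (⊤ : ℕ∞) χ)
    (hχ0 : ∀ x, 0 ≤ χ x) (hχ1 : ∀ x, χ x ≤ 1)
    (hχin : ∀ x : ℝ, |x| ≤ 3 → χ x = 1) (hχout : ∀ x : ℝ, 6 ≤ |x| → χ x = 0)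
    (p : ℝ) (hp0 : 0 < p) (hp1 : p ≤ 1) :
    ∃ C : ℝ, 0 < C ∧ ∀ u a b : ℝ, a ≠ 0 → b ≠ 0 →
      |χ (u / a) - χ (u / b)| * |u| ^ (1 + p) ≤ C * |a - b| * (|a| ^ p + |b| ^ p) := by
  obtain ⟨K, hK⟩ := exists_lipschitzWith_of_contDiff_of_eq_zero (hχsmooth.of_le (by simp)) hχout
  refine ⟨(K + 1 : ℝ≥0) * 6 ^ (2 + p), by positivity, fun u a b ha hb => ?_⟩
  simpa only [smul_eq_mul, inv_mul_eq_div, Real.norm_eq_abs] using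
    truncated_nonlinearity_contraction_estimate_general (u := u) (hK.weaken le_self_add)
      (by norm_num) hχout hp0.le ha hb
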